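/- arXiv:1010.3284 — 2 statements merged into one kernel-verified Lean document; each statement's English description precedes it below -/
import Mathlib

section
/- Fix I₁₂, I₂₃, I₃₁ ∈ [0,∞), and let Θᵢ(u) be the Euclidean inversive distance angles in the coordinates uᵢ = ln rᵢ as above. Then at every point u of the domain, the 3×3 matrix M(u) = (∂Θᵢ/∂uⱼ) is symmetric and negative semidefinite, M(u)·(1,1,1)ᵀ = 0, and xᵀ M(u) x < 0 for every nonzero x ∈ ℝ³ with x₁ + x₂ + x₃ = 0. (Equivalently: the potential F(u) = ∫ᵘ Σᵢ Θᵢ duᵢ is locally concave, satisfies F(u + (c,c,c)) = F(u), and is strictly locally concave on the hyperplane u₁+u₂+u₃ = 0.) -/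
/-!
Write `Lₖ = lₖ²`, `pₖ = rₖ²` and let `4A = √Q` be four times the area, `Q` being Heron's polynomial in
the `Lₖ`. Then `∂Lₖ/∂uₖ = 0`, `∂Lₖ/∂uᵢ = Lₖ + pᵢ - pⱼ = 2 rᵢ (rᵢ + rⱼ Iᵢⱼ) > 0`, and the law of cosines
gives
`4A dΘᵢ = dLᵢ - (Lᵢ + Lⱼ - Lₖ) / (2 Lⱼ) dLⱼ - (Lᵢ + Lₖ - Lⱼ) / (2 Lₖ) dLₖ`
(`hasFDerivAt_angle`). So `4A M` is an explicit rational matrix in `L` and `p`. It is symmetric with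
zero row sums, i.e. `4A xᵀ M x = -∑ wₖ (xᵢ - xⱼ)²` with `wₖ = 4A Mᵢⱼ`.

Such a form is definite modulo constants as soon as `w₀w₁ + w₁w₂ + w₂w₀ > 0` and one pair sum
`wᵢ + wⱼ` is positive (`form_pos`). The first quantity equals `Q det(∂L/∂u) / (8 L₀ L₁ L₂)`, where
`∂L/∂u` has zero diagonal and positive off-diagonal entries, so that its determinant is a sum of two
positive products. For the second, the pair sum `-4A Mᵢᵢ` belonging to the longest side `lᵢ` is a
combination of `∂Lⱼ/∂uᵢ` and `∂Lₖ/∂uᵢ` with positive coefficients, because the angles adjacent to the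
longest side are acute.
-/

open Real

/-- Euclidean inversive distance edge length: `I k` is the inversive distance on
the edge opposite vertex `k`, and `eucLen I r k = √(rᵢ² + rⱼ² + 2 rᵢ rⱼ Iᵢⱼ)`
where `{i, j} = {k+1, k+2}`. -/
noncomputable def eucLen (I r : Fin 3 → ℝ) (k : Fin 3) : ℝ :=
  Real.sqrt (r (k + 1) ^ 2 + r (k + 2) ^ 2 + 2 * r (k + 1) * r (k + 2) * I k)

/-- The inner angle at vertex `i` (opposite the side of length `eucLen I r i`)
of the Euclidean triangle with side lengths `eucLen I r`. -/
noncomputable def eucInvAngle (I r : Fin 3 → ℝ) (i : Fin 3) : ℝ :=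
  Real.arccos ((eucLen I r (i + 1) ^ 2 + eucLen I r (i + 2) ^ 2 -
      eucLen I r i ^ 2) / (2 * eucLen I r (i + 1) * eucLen I r (i + 2)))

/-- The domain, in the logarithmic coordinates `uᵢ = ln rᵢ`, where the three
Euclidean inversive distance lengths satisfy the strict triangle inequalities. -/
def eucDomainU (I : Fin 3 → ℝ) : Set (Fin 3 → ℝ) :=
  {u | ∀ i : Fin 3, eucLen I (fun j => Real.exp (u j)) i <
    eucLen I (fun j => Real.exp (u j)) (i + 1) +
    eucLen I (fun j => Real.exp (u j)) (i + 2)}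

/-- The angles `Θᵢ` as functions of the logarithmic coordinates `uᵢ = ln rᵢ`. -/
noncomputable def eucΘ (I : Fin 3 → ℝ) (i : Fin 3) (u : Fin 3 → ℝ) : ℝ :=
  eucInvAngle I (fun j => Real.exp (u j)) i

/-- The Jacobian matrix `M(u)ᵢⱼ = ∂Θᵢ/∂uⱼ`. -/
noncomputable def eucM (I : Fin 3 → ℝ) (u : Fin 3 → ℝ) (i j : Fin 3) : ℝ :=
  fderiv ℝ (eucΘ I i) u (Pi.single j 1)

/-! ### Derivatives of the angles -/

/-- The derivative of the angle opposite the side of squared length `f`, in a triangle whose other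
squared side lengths are `g` and `h`; the square root is four times the area. -/
lemma hasFDerivAt_angle {E : Type*} [NormedAddCommGroup E] [NormedSpace ℝ E]
    {f g h : E → ℝ} {f' g' h' : E →L[ℝ] ℝ} {x : E}
    (hf : HasFDerivAt f f' x) (hg : HasFDerivAt g g' x) (hh : HasFDerivAt h h' x)
    (g0 : 0 < g x) (h0 : 0 < h x)
    (hQ : 0 < 4 * g x * h x - (g x + h x - f x) ^ 2) :
    HasFDerivAt (fun y => arccos ((g y + h y - f y) / (2 * √(g y) * √(h y))))
      ((√(4 * g x * h x - (g x + h x - f x) ^ 2))⁻¹ •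
        (f' - ((f x + g x - h x) / (2 * g x)) • g' - ((f x + h x - g x) / (2 * h x)) • h')) x := by
  have sg := Real.sqrt_pos.2 g0
  have sh := Real.sqrt_pos.2 h0
  have sQ := Real.sqrt_pos.2 hQ
  have eg := Real.sq_sqrt g0.le
  have eh := Real.sq_sqrt h0.le
  have eQ := Real.sq_sqrt hQ.le
  have key : 1 - ((g x + h x - f x) / (2 * √(g x) * √(h x))) ^ 2 =
      (√(4 * g x * h x - (g x + h x - f x) ^ 2) / (2 * √(g x) * √(h x))) ^ 2 := by
    rw [div_pow, div_pow, mul_pow, mul_pow, eg, eh, eQ]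
    field_simp
    ring
  have key2 : √(1 - ((g x + h x - f x) / (2 * √(g x) * √(h x))) ^ 2) =
      √(4 * g x * h x - (g x + h x - f x) ^ 2) / (2 * √(g x) * √(h x)) := by
    rw [key, Real.sqrt_sq (by positivity)]
  have lt1 : ((g x + h x - f x) / (2 * √(g x) * √(h x))) ^ 2 < 1 := by
    have : 0 < (√(4 * g x * h x - (g x + h x - f x) ^ 2) / (2 * √(g x) * √(h x))) ^ 2 := by
      positivity
    linarith
  have ne1 : (g x + h x - f x) / (2 * √(g x) * √(h x)) ≠ -1 := by
    intro e
    rw [e] at lt1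
    norm_num at lt1
  have ne2 : (g x + h x - f x) / (2 * √(g x) * √(h x)) ≠ 1 := by
    intro e
    rw [e] at lt1
    norm_num at lt1
  have hd : HasFDerivAt (fun y => 2 * √(g y) * √(h y)) _ x :=
    ((hg.sqrt g0.ne').const_mul 2).mul (hh.sqrt h0.ne')
  have hq : HasFDerivAt (fun y => (g y + h y - f y) / (2 * √(g y) * √(h y))) _ x :=
    ((hg.add hh).sub hf).mul
      ((hasDerivAt_inv (x := 2 * √(g x) * √(h x)) (by positivity)).comp_hasFDerivAt x hd)
  have hA := (Real.hasDerivAt_arccos ne1 ne2).comp_hasFDerivAt x hq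
  refine hA.congr_fderiv ?_
  ext v
  rw [key2]
  simp only [smul_apply, sub_apply,
    add_apply, smul_eq_mul, Pi.add_apply, Pi.sub_apply]
  generalize √(4 * g x * h x - (g x + h x - f x) ^ 2) = s at *
  generalize √(g x) = a at *
  generalize √(h x) = b at *
  rw [← eg, ← eh]
  field_simp
  ring

/-- The squared edge length opposite vertex `k`, in logarithmic coordinates. -/
noncomputable def sqLen (I u : Fin 3 → ℝ) (k : Fin 3) : ℝ :=
  exp (u (k + 1)) ^ 2 + exp (u (k + 2)) ^ 2 + 2 * exp (u (k + 1)) * exp (u (k + 2)) * I k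

/-- The differential of the squared edge length `sqLen I u k` at `u`. -/
noncomputable def sqLenDeriv (I u : Fin 3 → ℝ) (k : Fin 3) : (Fin 3 → ℝ) →L[ℝ] ℝ :=
  (sqLen I u k + exp (u (k + 1)) ^ 2 - exp (u (k + 2)) ^ 2) •
      ContinuousLinearMap.proj (R := ℝ) (φ := fun _ : Fin 3 => ℝ) (k + 1) +
    (sqLen I u k + exp (u (k + 2)) ^ 2 - exp (u (k + 1)) ^ 2) •
      ContinuousLinearMap.proj (R := ℝ) (φ := fun _ : Fin 3 => ℝ) (k + 2)

lemma hasFDerivAt_sqLen (I u : Fin 3 → ℝ) (k : Fin 3) :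
    HasFDerivAt (fun u => sqLen I u k) (sqLenDeriv I u k) u := by
  have h1 := (hasFDerivAt_apply (𝕜 := ℝ) (F' := fun _ : Fin 3 => ℝ) (k + 1) u).exp
  have h2 := (hasFDerivAt_apply (𝕜 := ℝ) (F' := fun _ : Fin 3 => ℝ) (k + 2) u).exp
  have h := ((h1.pow 2).add (h2.pow 2)).add (((h1.const_mul 2).mul h2).mul_const (I k))
  refine h.congr_fderiv ?_
  ext v
  simp [sqLenDeriv, sqLen]
  ring

lemma sqLen_pos {I : Fin 3 → ℝ} (hI : ∀ k, 0 ≤ I k) (u : Fin 3 → ℝ) (k : Fin 3) :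
    0 < sqLen I u k := by
  have := hI k
  unfold sqLen
  positivity

/-- Heron's polynomial in the squared edge lengths, sixteen times the squared area. -/
noncomputable def heron (I u : Fin 3 → ℝ) : ℝ :=
  4 * sqLen I u 1 * sqLen I u 2 - (sqLen I u 1 + sqLen I u 2 - sqLen I u 0) ^ 2

lemma heron_eq (I u : Fin 3 → ℝ) (i : Fin 3) :
    4 * sqLen I u (i + 1) * sqLen I u (i + 2) -
      (sqLen I u (i + 1) + sqLen I u (i + 2) - sqLen I u i) ^ 2 = heron I u := by
  fin_cases i <;> simp [heron] <;> ring

lemma heron_pos {I : Fin 3 → ℝ} (hI : ∀ k, 0 ≤ I k) {u : Fin 3 → ℝ} (hu : u ∈ eucDomainU I) :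
    0 < heron I u := by
  have h0 := hu 0
  have h1 := hu 1
  have h2 := hu 2
  have e : ∀ k, eucLen I (fun j => exp (u j)) k = √(sqLen I u k) := fun k => rfl
  simp only [e, zero_add, show (1 + 1 : Fin 3) = 2 from rfl, show (1 + 2 : Fin 3) = 0 from rfl,
    show (2 + 1 : Fin 3) = 0 from rfl, show (2 + 2 : Fin 3) = 1 from rfl] at h0 h1 h2
  have q0 := Real.sq_sqrt (sqLen_pos hI u 0).le
  have q1 := Real.sq_sqrt (sqLen_pos hI u 1).le
  have q2 := Real.sq_sqrt (sqLen_pos hI u 2).le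
  unfold heron
  rw [← q0, ← q1, ← q2]
  generalize √(sqLen I u 0) = a at *
  generalize √(sqLen I u 1) = b at *
  generalize √(sqLen I u 2) = c at *
  have : 0 < (a + b + c) * (b + c - a) * (a + c - b) * (a + b - c) :=
    mul_pos (mul_pos (mul_pos (by linarith) (by linarith)) (by linarith)) (by linarith)
  calc (0 : ℝ) < _ := this
    _ = _ := by ring

lemma fderiv_eucΘ {I : Fin 3 → ℝ} (hI : ∀ k, 0 ≤ I k) {u : Fin 3 → ℝ} (hu : u ∈ eucDomainU I)
    (i : Fin 3) :
    fderiv ℝ (eucΘ I i) u = (√(heron I u))⁻¹ • (sqLenDeriv I u i -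
      ((sqLen I u i + sqLen I u (i + 1) - sqLen I u (i + 2)) / (2 * sqLen I u (i + 1))) •
        sqLenDeriv I u (i + 1) -
      ((sqLen I u i + sqLen I u (i + 2) - sqLen I u (i + 1)) / (2 * sqLen I u (i + 2))) •
        sqLenDeriv I u (i + 2)) := by
  have h := hasFDerivAt_angle (hasFDerivAt_sqLen I u i) (hasFDerivAt_sqLen I u (i + 1))
    (hasFDerivAt_sqLen I u (i + 2)) (sqLen_pos hI u _) (sqLen_pos hI u _)
    (by rw [heron_eq]; exact heron_pos hI hu)
  rw [heron_eq] at h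
  have e : eucΘ I i = fun y => arccos ((sqLen I y (i + 1) + sqLen I y (i + 2) - sqLen I y i) /
      (2 * √(sqLen I y (i + 1)) * √(sqLen I y (i + 2)))) := by
    funext y
    have e : ∀ k, eucLen I (fun j => exp (y j)) k = √(sqLen I y k) := fun k => rfl
    simp only [eucΘ, eucInvAngle, e, Real.sq_sqrt (sqLen_pos hI y _).le]
  rw [e]
  exact h.fderiv

/-! ### Positivity of the weighted Laplacian -/

/-- `√Q` times the off-diagonal entry of the Jacobian, for the two vertices with squared radii `p` and
`q` opposite to the sides of squared lengths `A` and `B`; the third vertex has squared radius `t` and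
opposite squared side length `C`. -/
noncomputable def conductance (A B C p q t : ℝ) : ℝ :=
  (A + B - C) / 2 + (p + q) / 2 - t + (A - B) * (p - q) / (2 * C)

/-- A weighted graph Laplacian on a triangle is positive definite modulo constants when its second
symmetric function and one of its diagonal entries are positive. -/
lemma form_pos {a b c : ℝ} (hW : 0 < a * b + b * c + c * a)
    (hs : 0 < a + b ∨ 0 < b + c ∨ 0 < c + a) (x y : ℝ) (hxy : x ≠ 0 ∨ y ≠ 0) :
    0 < a * x ^ 2 + b * y ^ 2 + c * (x + y) ^ 2 := by
  -- Any two pair sums have product `(square) + W > 0`, so they have the same sign.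
  have hca : 0 < c + a := by
    rcases hs with h | h | h
    · nlinarith [sq_nonneg a]
    · nlinarith [sq_nonneg c]
    · exact h
  have key : (c + a) * (a * x ^ 2 + b * y ^ 2 + c * (x + y) ^ 2) =
      ((c + a) * x + c * y) ^ 2 + (a * b + b * c + c * a) * y ^ 2 := by ring
  refine pos_of_mul_pos_right (a := c + a) ?_ hca.le
  rw [key]
  by_cases hy : y = 0
  · have hx : x ≠ 0 := by tauto
    subst hy
    have : 0 < ((c + a) * x) ^ 2 := by positivity
    simpa using this
  · have : 0 < (a * b + b * c + c * a) * y ^ 2 := by positivity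
    positivity

/-- The second symmetric function of the conductances is
`Q · det(∂L/∂u) / (8 L₀ L₁ L₂)`, with positive determinant. -/
lemma conductance_sum_pos {A B C p q t : ℝ} (hA : 0 < A) (hB : 0 < B) (hC : 0 < C)
    (a1 : 0 < A + q - t) (a2 : 0 < A + t - q) (b1 : 0 < B + t - p) (b2 : 0 < B + p - t)
    (c1 : 0 < C + p - q) (c2 : 0 < C + q - p) (hQ : 0 < 4 * B * C - (B + C - A) ^ 2) :
    0 < conductance A B C p q t * conductance B C A q t p +
      conductance B C A q t p * conductance C A B t p q +
      conductance C A B t p q * conductance A B C p q t := by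
  have : conductance A B C p q t * conductance B C A q t p +
      conductance B C A q t p * conductance C A B t p q +
      conductance C A B t p q * conductance A B C p q t =
      (4 * B * C - (B + C - A) ^ 2) * ((A + q - t) * (B + t - p) * (C + p - q) +
        (A + t - q) * (B + p - t) * (C + q - p)) / (8 * A * B * C) := by
    unfold conductance
    field_simp
    ring
  rw [this]
  positivity

/-- The diagonal entry at a vertex opposite to a longest side: the two angles adjacent to that side
are acute. -/
lemma conductance_add_pos {A B C p q t : ℝ} (hB : 0 < B) (hC : 0 < C)
    (b2 : 0 < B + p - t) (c1 : 0 < C + p - q) (hBA : B ≤ A) (hCA : C ≤ A) :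
    0 < conductance C A B t p q + conductance A B C p q t := by
  have : conductance C A B t p q + conductance A B C p q t =
      (A + B - C) / (2 * B) * (B + p - t) + (A + C - B) / (2 * C) * (C + p - q) := by
    unfold conductance
    field_simp
    ring
  rw [this]
  have h1 : 0 < A + B - C := by linarith
  have h2 : 0 < A + C - B := by linarith
  positivity

/-! ### Concavity -/

/-- Guo's concavity (Euclidean case): at every point of the domain, the matrix
`M(u) = (∂Θᵢ/∂uⱼ)` is symmetric, negative semidefinite, kills the vector
`(1,1,1)`, and is negative definite on the hyperplane `x₁ + x₂ + x₃ = 0`.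
Equivalently, the potential `F(u) = ∫ᵘ Σᵢ Θᵢ duᵢ` is locally concave,
translation invariant along `(1,1,1)`, and strictly locally concave on
`u₁ + u₂ + u₃ = 0`. -/
theorem euc_inversive_concavity (I : Fin 3 → ℝ) (hI : ∀ k, 0 ≤ I k)
    (u : Fin 3 → ℝ) (hu : u ∈ eucDomainU I) :
    (∀ i j, eucM I u i j = eucM I u j i) ∧
    (∀ x : Fin 3 → ℝ, ∑ i, ∑ j, x i * eucM I u i j * x j ≤ 0) ∧
    (∀ i, ∑ j, eucM I u i j = 0) ∧
    (∀ x : Fin 3 → ℝ, x ≠ 0 → x 0 + x 1 + x 2 = 0 →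
      ∑ i, ∑ j, x i * eucM I u i j * x j < 0) := by
  have hQ := heron_pos hI hu
  have hs := Real.sqrt_pos.2 hQ
  have hA := sqLen_pos hI u 0
  have hB := sqLen_pos hI u 1
  have hC := sqLen_pos hI u 2
  -- The entries `∂Lₖ/∂uᵢ` are positive.
  have pos1 : ∀ k, 0 < sqLen I u k + exp (u (k + 1)) ^ 2 - exp (u (k + 2)) ^ 2 := by
    intro k
    have := hI k
    have : 0 < 2 * exp (u (k + 1)) ^ 2 + 2 * exp (u (k + 1)) * exp (u (k + 2)) * I k := by
      positivity
    unfold sqLen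
    linarith
  have pos2 : ∀ k, 0 < sqLen I u k + exp (u (k + 2)) ^ 2 - exp (u (k + 1)) ^ 2 := by
    intro k
    have := hI k
    have : 0 < 2 * exp (u (k + 2)) ^ 2 + 2 * exp (u (k + 1)) * exp (u (k + 2)) * I k := by
      positivity
    unfold sqLen
    linarith
  have a1 := pos1 0
  have b1 := pos1 1
  have c1 := pos1 2
  have a2 := pos2 0
  have b2 := pos2 1
  have c2 := pos2 2
  have f11 : (1 + 1 : Fin 3) = 2 := rfl
  have f12 : (1 + 2 : Fin 3) = 0 := rfl
  have f21 : (2 + 1 : Fin 3) = 0 := rfl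
  have f22 : (2 + 2 : Fin 3) = 1 := rfl
  simp only [zero_add, f11, f12, f21, f22] at a1 a2 b1 b2 c1 c2
  have entry : ∀ i j, eucM I u i j = (√(heron I u))⁻¹ * (sqLenDeriv I u i (Pi.single j 1) -
      ((sqLen I u i + sqLen I u (i + 1) - sqLen I u (i + 2)) / (2 * sqLen I u (i + 1))) *
        sqLenDeriv I u (i + 1) (Pi.single j 1) -
      ((sqLen I u i + sqLen I u (i + 2) - sqLen I u (i + 1)) / (2 * sqLen I u (i + 2))) *
        sqLenDeriv I u (i + 2) (Pi.single j 1)) := by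
    intro i j
    rw [eucM, fderiv_eucΘ hI hu]
    simp only [smul_apply, sub_apply, smul_eq_mul]
  have D : ∀ k v, sqLenDeriv I u k v =
      (sqLen I u k + exp (u (k + 1)) ^ 2 - exp (u (k + 2)) ^ 2) * v (k + 1) +
      (sqLen I u k + exp (u (k + 2)) ^ 2 - exp (u (k + 1)) ^ 2) * v (k + 2) := by
    intro k v
    simp [sqLenDeriv]
  simp only [D] at entry
  unfold heron at hQ
  generalize √(heron I u) = s at *
  generalize sqLen I u = L at *
  obtain ⟨P, hP⟩ : ∃ P : Fin 3 → ℝ, ∀ k, exp (u k) ^ 2 = P k := ⟨_, fun _ => rfl⟩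
  simp only [hP] at *
  have W := conductance_sum_pos hA hB hC a1 a2 b1 b2 c1 c2 hQ
  have S : 0 < conductance (L 0) (L 1) (L 2) (P 0) (P 1) (P 2) +
        conductance (L 1) (L 2) (L 0) (P 1) (P 2) (P 0) ∨
      0 < conductance (L 1) (L 2) (L 0) (P 1) (P 2) (P 0) +
        conductance (L 2) (L 0) (L 1) (P 2) (P 0) (P 1) ∨
      0 < conductance (L 2) (L 0) (L 1) (P 2) (P 0) (P 1) +
        conductance (L 0) (L 1) (L 2) (P 0) (P 1) (P 2) := by
    rcases le_total (L 0) (L 1) with h | h <;> rcases le_total (L 1) (L 2) with h₂ | h₂ <;>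
      rcases le_total (L 0) (L 2) with h₃ | h₃
    all_goals first
      | exact Or.inr (Or.inr (conductance_add_pos hB hC b2 c1 (by linarith) (by linarith)))
      | exact Or.inl (conductance_add_pos hC hA c2 a1 (by linarith) (by linarith))
      | exact Or.inr (Or.inl (conductance_add_pos hA hB a2 b1 (by linarith) (by linarith)))
  have m01 : eucM I u 0 1 = s⁻¹ * conductance (L 0) (L 1) (L 2) (P 0) (P 1) (P 2) := by
    rw [entry]
    congr 1
    simp [f11, f12, f21, f22, conductance]
    field_simp
    ring
  have m10 : eucM I u 1 0 = s⁻¹ * conductance (L 0) (L 1) (L 2) (P 0) (P 1) (P 2) := by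
    rw [entry]
    congr 1
    simp [f11, f12, f21, f22, conductance]
    field_simp
    ring
  have m12 : eucM I u 1 2 = s⁻¹ * conductance (L 1) (L 2) (L 0) (P 1) (P 2) (P 0) := by
    rw [entry]
    congr 1
    simp [f11, f12, f21, f22, conductance]
    field_simp
    ring
  have m21 : eucM I u 2 1 = s⁻¹ * conductance (L 1) (L 2) (L 0) (P 1) (P 2) (P 0) := by
    rw [entry]
    congr 1
    simp [f11, f12, f21, f22, conductance]
    field_simp
    ring
  have m20 : eucM I u 2 0 = s⁻¹ * conductance (L 2) (L 0) (L 1) (P 2) (P 0) (P 1) := by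
    rw [entry]
    congr 1
    simp [f11, f12, f21, f22, conductance]
    field_simp
    ring
  have m02 : eucM I u 0 2 = s⁻¹ * conductance (L 2) (L 0) (L 1) (P 2) (P 0) (P 1) := by
    rw [entry]
    congr 1
    simp [f11, f12, f21, f22, conductance]
    field_simp
    ring
  have row : ∀ i, ∑ j, eucM I u i j = 0 := by
    intro i
    rw [Fin.sum_univ_three]
    fin_cases i <;> simp [entry, f11, f12, f21, f22] <;> field_simp <;> ring
  have form : ∀ x : Fin 3 → ℝ, ∑ i, ∑ j, x i * eucM I u i j * x j =
      -(s⁻¹ * (conductance (L 0) (L 1) (L 2) (P 0) (P 1) (P 2) * (x 0 - x 1) ^ 2 +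
        conductance (L 1) (L 2) (L 0) (P 1) (P 2) (P 0) * (x 1 - x 2) ^ 2 +
        conductance (L 2) (L 0) (L 1) (P 2) (P 0) (P 1) * (x 0 - x 1 + (x 1 - x 2)) ^ 2)) := by
    intro x
    have r0 := row 0
    have r1 := row 1
    have r2 := row 2
    simp only [Fin.sum_univ_three] at r0 r1 r2 ⊢
    rw [m01, m02] at *
    rw [m10, m12] at *
    rw [m20, m21] at *
    linear_combination x 0 ^ 2 * r0 + x 1 ^ 2 * r1 + x 2 ^ 2 * r2
  have neg : ∀ x : Fin 3 → ℝ, (x 0 - x 1 ≠ 0 ∨ x 1 - x 2 ≠ 0) →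
      ∑ i, ∑ j, x i * eucM I u i j * x j < 0 := by
    intro x hx
    rw [form, neg_lt_zero]
    exact mul_pos (inv_pos.2 hs) (form_pos W S _ _ hx)
  refine ⟨?_, ?_, row, ?_⟩
  · intro i j
    fin_cases i <;> fin_cases j <;> simp [m01, m10, m12, m21, m20, m02]
  · intro x
    by_cases hx : x 0 - x 1 ≠ 0 ∨ x 1 - x 2 ≠ 0
    · exact (neg x hx).le
    · push Not at hx
      rw [form, hx.1, hx.2]
      simp
  · intro x hx hsum
    refine neg x ?_
    by_contra! h
    refine hx (funext fun i => ?_)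
    fin_cases i <;> simp <;> linarith [h.1, h.2]
end

section
/- Fix h ∈ ℝ. For a hyperbolic triangle with side lengths l ∈ Ω and inner angles θᵢ(l) opposite lᵢ, define αᵢ(l) = ∫_{π/2}^{θᵢ(l)} sinʰ(t) dt, and introduce coordinates uᵢ = g(lᵢ) where g(t) = ∫_{1}^{t} sinh^{−h−1}(x) dx (a real analytic diffeomorphism of ℝ_{>0} onto its image). Then, viewing Aᵢ(u) = αᵢ(l(u)) as functions of u on g(Ω), one has ∂Aᵢ/∂uⱼ = ∂Aⱼ/∂uᵢ for all i, j; that is, the 1-form w_h = Σᵢ αᵢ(l) sinh^{−h−1}(lᵢ) dlᵢ = Σᵢ Aᵢ duᵢ is closed. -/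
/-!
Write `a, b, c` for the sides `l i, l (i+1), l (i+2)` and `x = cos θᵢ` for the law-of-cosines
quotient. On the natural domain `-1 < x < 1` (`hypCos_mem_Ioo`, which is the triangle inequality
read through `cosh (b ± c)`), so `αᵢ` is a smooth function of `l` and the chain rule gives
`∂αᵢ/∂lⱼ = -(sin θᵢ)^(h-1) ∂x/∂lⱼ` (`fderiv_hypα`).

Put `Δ = 1 + 2 cosh a cosh b cosh c - cosh² a - cosh² b - cosh² c`, which is symmetric in the
sides; then `sin θᵢ = √Δ / (sinh b sinh c)`. Substituting this and
`∂x/∂b = (cosh a cosh b - cosh c) / (sinh² b sinh c)`, the entry of the matrix at `(i, i+1)`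
becomes `-(√Δ)^(h-1) (cosh a cosh b - cosh c) / (sinh c)^h`, an expression symmetric
in `a` and `b` (`hypMh_succ`, `hypMh_succ_succ`).
-/


open Real Set

/-- The inner angle of a hyperbolic triangle with side lengths `l` opposite the
side of length `l i`. -/
noncomputable def hypAngle (l : Fin 3 → ℝ) (i : Fin 3) : ℝ :=
  Real.arccos ((Real.cosh (l (i + 1)) * Real.cosh (l (i + 2)) -
      Real.cosh (l i)) / (Real.sinh (l (i + 1)) * Real.sinh (l (i + 2))))

/-- The natural domain of hyperbolic side-length vectors. -/
def hypNatDomain : Set (Fin 3 → ℝ) :=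
  {l | (∀ i, 0 < l i) ∧ ∀ i : Fin 3, l i < l (i + 1) + l (i + 2)}

/-- The coefficient `αᵢ(l) = ∫_{π/2}^{θᵢ(l)} sinʰ t dt` of the 1-form `w_h`. -/
noncomputable def hypα (h : ℝ) (i : Fin 3) (l : Fin 3 → ℝ) : ℝ :=
  ∫ t in (Real.pi / 2)..(hypAngle l i), Real.sin t ^ h

/-- The matrix `(∂Aᵢ/∂uⱼ)` of the functions `Aᵢ(u) = αᵢ(l(u))` in the
coordinates `uᵢ = g(lᵢ)`, `g(t) = ∫_1^t sinh^{−h−1} x dx`, expressed at the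
point `l`: since `duⱼ/dlⱼ = g'(lⱼ) = sinh^{−h−1}(lⱼ)`, one has
`∂Aᵢ/∂uⱼ = (∂αᵢ/∂lⱼ) · sinh^{h+1}(lⱼ)`. -/
noncomputable def hypMh (h : ℝ) (l : Fin 3 → ℝ) (i j : Fin 3) : ℝ :=
  fderiv ℝ (hypα h i) l (Pi.single j 1) * Real.sinh (l j) ^ (h + 1)

/-- The cosine of the inner angle opposite side `l i`, by the hyperbolic law of cosines. -/
noncomputable def hypCos (i : Fin 3) (l : Fin 3 → ℝ) : ℝ :=
  (cosh (l (i + 1)) * cosh (l (i + 2)) - cosh (l i)) / (sinh (l (i + 1)) * sinh (l (i + 2)))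

/-- The Gram-type determinant `Δ` of the three sides; `√Δ` is the common numerator of the sines
of the inner angles. -/
noncomputable def hypGram (l : Fin 3 → ℝ) : ℝ :=
  1 + 2 * cosh (l 0) * cosh (l 1) * cosh (l 2) - cosh (l 0) ^ 2 - cosh (l 1) ^ 2 - cosh (l 2) ^ 2

lemma hypGram_eq (l : Fin 3 → ℝ) (i : Fin 3) :
    hypGram l = (sinh (l (i + 1)) * sinh (l (i + 2))) ^ 2 -
      (cosh (l (i + 1)) * cosh (l (i + 2)) - cosh (l i)) ^ 2 := by
  rw [mul_pow, sinh_sq, sinh_sq, hypGram]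
  fin_cases i <;> simp <;> ring

lemma hypCos_mem_Ioo {l : Fin 3 → ℝ} (hl : l ∈ hypNatDomain) (i : Fin 3) :
    hypCos i l ∈ Ioo (-1) 1 := by
  have hb := sinh_pos_iff.2 (hl.1 (i + 1))
  have hc := sinh_pos_iff.2 (hl.1 (i + 2))
  have h0 := hl.1 i
  have h1 := hl.2 i
  have h2 : l (i + 1) < l (i + 2) + l i := by
    have := hl.2 (i + 1)
    fin_cases i <;> simpa using this
  have h3 : l (i + 2) < l i + l (i + 1) := by
    have := hl.2 (i + 2)
    fin_cases i <;> simpa using this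
  have hs : cosh (l i) < cosh (l (i + 1) + l (i + 2)) := by
    rw [cosh_lt_cosh, abs_of_pos h0]
    exact h1.trans_le (le_abs_self _)
  have hd : cosh (l (i + 1) - l (i + 2)) < cosh (l i) := by
    rw [cosh_lt_cosh, abs_of_pos h0, abs_lt]
    constructor <;> linarith
  rw [cosh_add] at hs
  rw [cosh_sub] at hd
  have := mul_pos hb hc
  constructor
  · rw [hypCos, lt_div_iff₀ this]; linarith
  · rw [hypCos, div_lt_iff₀ this]; linarith

lemma hypGram_pos {l : Fin 3 → ℝ} (hl : l ∈ hypNatDomain) : 0 < hypGram l := by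
  have hb := sinh_pos_iff.2 (hl.1 (0 + 1))
  have hc := sinh_pos_iff.2 (hl.1 (0 + 2))
  obtain ⟨h1, h2⟩ := hypCos_mem_Ioo hl 0
  rw [hypCos, lt_div_iff₀ (mul_pos hb hc)] at h1
  rw [hypCos, div_lt_iff₀ (mul_pos hb hc)] at h2
  rw [hypGram_eq l 0]
  nlinarith

/-- The sine of the inner angle opposite `l i`. -/
lemma sqrt_one_sub_hypCos_sq {l : Fin 3 → ℝ} (hl : l ∈ hypNatDomain) (i : Fin 3) :
    √(1 - hypCos i l ^ 2) = √(hypGram l) / (sinh (l (i + 1)) * sinh (l (i + 2))) := by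
  have hb := sinh_pos_iff.2 (hl.1 (i + 1))
  have hc := sinh_pos_iff.2 (hl.1 (i + 2))
  rw [← sqrt_sq (mul_pos hb hc).le, ← sqrt_div' _ (sq_nonneg _),
    hypGram_eq l i, hypCos]
  congr 1
  field_simp

lemma contDiffAt_hypCos {l : Fin 3 → ℝ} (hl : l ∈ hypNatDomain) (i : Fin 3) :
    ContDiffAt ℝ (⊤ : ℕ∞) (hypCos i) l := by
  have hb := sinh_pos_iff.2 (hl.1 (i + 1))
  have hc := sinh_pos_iff.2 (hl.1 (i + 2))
  unfold hypCos
  refine ContDiffAt.div ?_ ?_ (mul_pos hb hc).ne' <;> fun_prop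

lemma hasDerivAt_integral_sin_rpow (h : ℝ) {θ : ℝ} (hθ : θ ∈ Ioo 0 π) :
    HasDerivAt (fun θ => ∫ t in (π / 2)..θ, sin t ^ h) (sin θ ^ h) θ := by
  have hcont : ContinuousOn (fun t => sin t ^ h) (Ioo 0 π) := fun t ht =>
    (continuous_sin.continuousAt.rpow_const
      (Or.inl (sin_pos_of_mem_Ioo ht).ne')).continuousWithinAt
  have hsub : uIcc (π / 2) θ ⊆ Ioo 0 π :=
    ordConnected_Ioo.uIcc_subset ⟨by positivity, by linarith [pi_pos]⟩ hθ
  exact intervalIntegral.integral_hasDerivAt_right (hcont.mono hsub).intervalIntegrable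
    (hcont.stronglyMeasurableAtFilter isOpen_Ioo θ hθ)
    (hcont.continuousAt (isOpen_Ioo.mem_nhds hθ))

lemma contDiffOn_integral_sin_rpow (h : ℝ) :
    ContDiffOn ℝ (⊤ : ℕ∞) (fun θ => ∫ t in (π / 2)..θ, sin t ^ h) (Ioo 0 π) := by
  rw [contDiffOn_infty_iff_deriv_of_isOpen isOpen_Ioo]
  refine ⟨fun θ hθ =>
    (hasDerivAt_integral_sin_rpow h hθ).differentiableAt.differentiableWithinAt, ?_⟩
  refine ContDiffOn.congr (f := fun θ => sin θ ^ h) (fun θ hθ => ?_)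
    fun θ hθ => (hasDerivAt_integral_sin_rpow h hθ).deriv
  exact (contDiff_sin.contDiffAt.rpow_const_of_ne
    (sin_pos_of_mem_Ioo hθ).ne').contDiffWithinAt

lemma arccos_mem_Ioo {x : ℝ} (hx : x ∈ Ioo (-1) 1) : arccos x ∈ Ioo 0 π := by
  refine ⟨arccos_pos.2 hx.2, (arccos_le_pi x).lt_of_ne fun h => ?_⟩
  exact absurd (arccos_eq_pi.1 h) (not_le.2 hx.1)

lemma contDiffOn_hypα (h : ℝ) (i : Fin 3) :
    ContDiffOn ℝ (⊤ : ℕ∞) (hypα h i) hypNatDomain := by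
  intro l hl
  have hx := hypCos_mem_Ioo hl i
  have hF := (contDiffOn_integral_sin_rpow h).contDiffAt
    (isOpen_Ioo.mem_nhds (arccos_mem_Ioo hx))
  have hA : ContDiffAt ℝ (⊤ : ℕ∞) arccos (hypCos i l) :=
    contDiffAt_arccos hx.1.ne' hx.2.ne
  exact (ContDiffAt.comp l hF (ContDiffAt.comp l hA (contDiffAt_hypCos hl i))).contDiffWithinAt

lemma fderiv_hypα (h : ℝ) {l : Fin 3 → ℝ} (hl : l ∈ hypNatDomain) (i : Fin 3)
    (v : Fin 3 → ℝ) :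
    fderiv ℝ (hypα h i) l v =
      -(√(1 - hypCos i l ^ 2) ^ h / √(1 - hypCos i l ^ 2)) * fderiv ℝ (hypCos i) l v := by
  have hx := hypCos_mem_Ioo hl i
  have hq := ((contDiffAt_hypCos hl i).differentiableAt (by simp)).hasFDerivAt
  have hd := ((hasDerivAt_integral_sin_rpow h (arccos_mem_Ioo hx)).comp (hypCos i l)
    (hasDerivAt_arccos hx.1.ne' hx.2.ne)).comp_hasFDerivAt l hq
  have := hd.fderiv
  change fderiv ℝ (hypα h i) l = _ at this
  rw [this, sin_arccos]
  simp only [smul_apply, smul_eq_mul]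
  ring

lemma fderiv_hypCos {l : Fin 3 → ℝ} (hl : l ∈ hypNatDomain) (i : Fin 3) (v : Fin 3 → ℝ) :
    fderiv ℝ (hypCos i) l v =
      (cosh (l i) * cosh (l (i + 1)) - cosh (l (i + 2))) /
          (sinh (l (i + 1)) ^ 2 * sinh (l (i + 2))) * v (i + 1) +
        (cosh (l i) * cosh (l (i + 2)) - cosh (l (i + 1))) /
          (sinh (l (i + 1)) * sinh (l (i + 2)) ^ 2) * v (i + 2) -
        sinh (l i) / (sinh (l (i + 1)) * sinh (l (i + 2))) * v i := by
  have hb := sinh_pos_iff.2 (hl.1 (i + 1))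
  have hc := sinh_pos_iff.2 (hl.1 (i + 2))
  have hp (k : Fin 3) : HasFDerivAt (fun l : Fin 3 → ℝ => l k)
      (ContinuousLinearMap.proj (R := ℝ) (φ := fun _ : Fin 3 => ℝ) k) l :=
    hasFDerivAt_apply k l
  have hd := (((hp (i + 1)).cosh.mul (hp (i + 2)).cosh).sub (hp i).cosh).mul
    ((hasDerivAt_inv (mul_pos hb hc).ne').comp_hasFDerivAt l
      ((hp (i + 1)).sinh.mul (hp (i + 2)).sinh))
  have := hd.fderiv
  change fderiv ℝ (hypCos i) l = _ at this
  rw [this]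
  simp
  field_simp
  have e1 := cosh_sq (l (i + 1))
  have e2 := cosh_sq (l (i + 2))
  grind

/-- The symmetric form of the entries next to the diagonal: exchanging the roles of the two sides
`l i` and `l (i + 1)` leaves the right-hand side unchanged. -/
lemma hypMh_succ (h : ℝ) {l : Fin 3 → ℝ} (hl : l ∈ hypNatDomain) (i : Fin 3) :
    hypMh h l i (i + 1) = -(√(hypGram l) ^ h / √(hypGram l)) *
      (cosh (l i) * cosh (l (i + 1)) - cosh (l (i + 2))) / sinh (l (i + 2)) ^ h := by
  have hb := sinh_pos_iff.2 (hl.1 (i + 1))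
  have hc := sinh_pos_iff.2 (hl.1 (i + 2))
  have hD := sqrt_pos.2 (hypGram_pos hl)
  have hbh := rpow_pos_of_pos hb h
  have hch := rpow_pos_of_pos hc h
  have n1 : i + 2 ≠ i + 1 := by fin_cases i <;> decide
  have n2 : i ≠ i + 1 := by fin_cases i <;> decide
  rw [hypMh, fderiv_hypα h hl, fderiv_hypCos hl, sqrt_one_sub_hypCos_sq hl,
    div_rpow hD.le (mul_pos hb hc).le, mul_rpow hb.le hc.le, rpow_add_one hb.ne']
  rw [Pi.single_eq_same, Pi.single_eq_of_ne n1, Pi.single_eq_of_ne n2]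
  field_simp
  ring

lemma hypMh_succ_succ (h : ℝ) {l : Fin 3 → ℝ} (hl : l ∈ hypNatDomain) (i : Fin 3) :
    hypMh h l i (i + 2) = -(√(hypGram l) ^ h / √(hypGram l)) *
      (cosh (l i) * cosh (l (i + 2)) - cosh (l (i + 1))) / sinh (l (i + 1)) ^ h := by
  have hb := sinh_pos_iff.2 (hl.1 (i + 1))
  have hc := sinh_pos_iff.2 (hl.1 (i + 2))
  have hD := sqrt_pos.2 (hypGram_pos hl)
  have hbh := rpow_pos_of_pos hb h
  have hch := rpow_pos_of_pos hc h
  have n1 : i + 1 ≠ i + 2 := by fin_cases i <;> decide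
  have n2 : i ≠ i + 2 := by fin_cases i <;> decide
  rw [hypMh, fderiv_hypα h hl, fderiv_hypCos hl, sqrt_one_sub_hypCos_sq hl,
    div_rpow hD.le (mul_pos hb hc).le, mul_rpow hb.le hc.le, rpow_add_one hc.ne']
  rw [Pi.single_eq_same, Pi.single_eq_of_ne n1, Pi.single_eq_of_ne n2]
  field_simp
  ring

lemma hypMh_succ_comm (h : ℝ) {l : Fin 3 → ℝ} (hl : l ∈ hypNatDomain) (i : Fin 3) :
    hypMh h l i (i + 1) = hypMh h l (i + 1) i := by
  have e1 : i + 1 + 2 = i := by fin_cases i <;> decide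
  have e2 : i + 1 + 1 = i + 2 := by fin_cases i <;> decide
  have h2 := hypMh_succ_succ h hl (i + 1)
  rw [e1, e2] at h2
  rw [h2, hypMh_succ h hl, mul_comm (cosh (l i))]

/-- Theorem 4.1(3): for every `h ∈ ℝ`, the functions `αᵢ` are smooth on the
natural domain `Ω` and `∂Aᵢ/∂uⱼ = ∂Aⱼ/∂uᵢ` for all `i, j`; that is, the 1-form
`w_h = Σᵢ αᵢ sinh^{−h−1}(lᵢ) dlᵢ = Σᵢ Aᵢ duᵢ` is closed. -/
theorem hyp_schlaefli_form_closed (h : ℝ) :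
    (∀ i, ContDiffOn ℝ (⊤ : ℕ∞) (hypα h i) hypNatDomain) ∧
    ∀ l ∈ hypNatDomain, ∀ i j, hypMh h l i j = hypMh h l j i := by
  refine ⟨contDiffOn_hypα h, fun l hl i j => ?_⟩
  -- Two distinct elements of `Fin 3` are cyclic neighbours, in one order or the other.
  have hij : j = i ∨ j = i + 1 ∨ i = j + 1 := by revert i j; decide
  rcases hij with rfl | rfl | rfl
  · rfl
  · exact hypMh_succ_comm h hl i
  · exact (hypMh_succ_comm h hl j).symm
end
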